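/- arXiv:2009.10302 — 2 statements merged into one kernel-verified Lean document; each statement's English description precedes it below -/
import Mathlib

section
/- For every ε > 0 and every t > 0, the radial Eguchi–Hanson potential satisfies deriv ψ_ε t > 0 and deriv ψ_ε t + t·deriv (deriv ψ_ε) t > 0; this expresses the positivity (Kähler property) of the (1,1)-form i∂∂̄F_ε on (ℂ²∖{0})/±1. -/
/-- The radial Eguchi–Hanson potential `ψ_ε(t)` in the variable `t = ‖z‖²`. -/
noncomputable def radialEH (ε : ℝ) (t : ℝ) : ℝ :=
  Real.sqrt (t ^ 2 + ε ^ 2) + ε * Real.log (t / (Real.sqrt (t ^ 2 + ε ^ 2) + ε))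

/-!
The logarithmic term is chosen so that `t ψ_ε'(t) = √(t² + ε²)`. Since `ψ' + t ψ'' = (t ψ')'`, both
quantities are explicit: `ψ_ε' = √(t² + ε²) / t` and `ψ_ε' + t ψ_ε'' = t / √(t² + ε²)`.
-/

open Filter Topology

theorem add_mul_deriv_eq_of_mul_eventuallyEq {𝕜 : Type*} [NontriviallyNormedField 𝕜]
    {φ g : 𝕜 → 𝕜} {g' t : 𝕜} (ht : t ≠ 0) (hg : HasDerivAt g g' t)
    (hφg : (fun x => x * φ x) =ᶠ[𝓝 t] g) : φ t + t * deriv φ t = g' := by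
  have φ_eq_div : φ =ᶠ[𝓝 t] fun x => g x / x := by
    filter_upwards [hφg, eventually_ne_nhds ht] with x hx hx0
    rw [← hx, mul_div_cancel_left₀ _ hx0]
  have φ_differentiable : DifferentiableAt 𝕜 φ t :=
    (hg.differentiableAt.fun_div differentiableAt_fun_id ht).congr_of_eventuallyEq φ_eq_div
  have product_rule : HasDerivAt (fun x => x * φ x) (1 * φ t + t * deriv φ t) t :=
    (hasDerivAt_id' t).fun_mul φ_differentiable.hasDerivAt
  rw [← one_mul (φ t)]
  exact product_rule.unique (hg.congr_of_eventuallyEq hφg)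

theorem hasDerivAt_sqrt_sq_add_const {c t : ℝ} (h : t ^ 2 + c ≠ 0) :
    HasDerivAt (fun x => √(x ^ 2 + c)) (t / √(t ^ 2 + c)) t := by
  refine (((hasDerivAt_pow 2 t).add_const c).sqrt h).congr_deriv ?_
  rw [Nat.cast_ofNat, pow_one, mul_div_mul_left _ _ two_ne_zero]

theorem sqrt_sq_add_sq_add_pos {t : ℝ} (ht : t ≠ 0) (ε : ℝ) : 0 < √(t ^ 2 + ε ^ 2) + ε := by
  have abs_lt_sqrt : |ε| < √(t ^ 2 + ε ^ 2) :=
    Real.lt_sqrt_of_sq_lt (by rw [sq_abs]; exact lt_add_of_pos_left _ (by positivity))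
  linarith [neg_abs_le ε]

theorem hasDerivAt_radialEH (ε : ℝ) {t : ℝ} (ht : t ≠ 0) :
    HasDerivAt (radialEH ε) (√(t ^ 2 + ε ^ 2) / t) t := by
  have sq_add_sq_pos : 0 < t ^ 2 + ε ^ 2 := by positivity
  have sqrt_deriv := hasDerivAt_sqrt_sq_add_const sq_add_sq_pos.ne'
  have denom_ne : √(t ^ 2 + ε ^ 2) + ε ≠ 0 := (sqrt_sq_add_sq_add_pos ht ε).ne'
  have log_deriv := ((hasDerivAt_id' t).fun_div (sqrt_deriv.add_const ε) denom_ne).log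
    (div_ne_zero ht denom_ne)
  refine (sqrt_deriv.fun_add (log_deriv.const_mul ε)).congr_deriv ?_
  have sqrt_ne : √(t ^ 2 + ε ^ 2) ≠ 0 := (Real.sqrt_pos.2 sq_add_sq_pos).ne'
  have sq_eq : t ^ 2 = √(t ^ 2 + ε ^ 2) ^ 2 - ε ^ 2 := by
    rw [Real.sq_sqrt sq_add_sq_pos.le, add_sub_cancel_right]
  generalize √(t ^ 2 + ε ^ 2) = s at *
  field_simp
  rw [sq_eq]
  ring

theorem deriv_radialEH (ε : ℝ) {t : ℝ} (ht : t ≠ 0) :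
    deriv (radialEH ε) t = √(t ^ 2 + ε ^ 2) / t :=
  (hasDerivAt_radialEH ε ht).deriv

theorem deriv_add_mul_deriv_deriv_radialEH (ε : ℝ) {t : ℝ} (ht : t ≠ 0) :
    deriv (radialEH ε) t + t * deriv (deriv (radialEH ε)) t = t / √(t ^ 2 + ε ^ 2) := by
  refine add_mul_deriv_eq_of_mul_eventuallyEq ht
    (hasDerivAt_sqrt_sq_add_const (by positivity : t ^ 2 + ε ^ 2 ≠ 0)) ?_
  filter_upwards [eventually_ne_nhds ht] with x hx
  rw [deriv_radialEH ε hx, mul_div_cancel₀ _ hx]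

/-- Positivity (Kähler property) of the Eguchi–Hanson form in the radial variable:
for every `ε > 0` and `t > 0`, one has `ψ_ε'(t) > 0` and `ψ_ε'(t) + t·ψ_ε''(t) > 0`. -/
theorem radialEH_kaehler_positivity (ε t : ℝ) (hε : 0 < ε) (ht : 0 < t) :
    0 < deriv (radialEH ε) t ∧
      0 < deriv (radialEH ε) t + t * deriv (deriv (radialEH ε)) t := by
  rw [deriv_add_mul_deriv_deriv_radialEH ε ht.ne', deriv_radialEH ε ht.ne']
  constructor <;> positivity
end

section
/- There exists a constant C > 0 such that for every ε ∈ (0,1] and every z ∈ ℂ² with 0 < ‖z‖ ≤ 2, the error term satisfies |F_ε(z) − ‖z‖²| ≤ C·ε·(1 + |log ‖z‖| + |log ε|). -/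
/-- The Eguchi–Hanson potential `F ε` on `ℂ² ∖ {0}`. -/
noncomputable def eguchiHanson (ε : ℝ) (z : EuclideanSpace ℂ (Fin 2)) : ℝ :=
  Real.sqrt (‖z‖ ^ 4 + ε ^ 2) +
    ε * Real.log (‖z‖ ^ 2 / (Real.sqrt (‖z‖ ^ 4 + ε ^ 2) + ε))

/-!
With `x = ‖z‖²`, the logarithm in the potential is `-arsinh (ε / x)`, so that
`F_ε(z) - x = (√(x² + ε²) - x) - ε * arsinh (ε / x)` is a difference of two nonnegative terms.
The first is at most `ε`, and `arsinh t ≤ 1 + |log t|` bounds the second.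
-/

theorem exp_le_sinh_one_add {s : ℝ} (hs : 0 ≤ s) : Real.exp s ≤ Real.sinh (1 + s) := by
  have exp_one_add : 2.7 * Real.exp s ≤ Real.exp (1 + s) := by
    rw [Real.exp_add]
    gcongr
    linarith [Real.exp_one_gt_d9]
  have exp_neg_one_add : Real.exp (-(1 + s)) ≤ 0.5 :=
    calc Real.exp (-(1 + s)) ≤ Real.exp (-1) := by gcongr; linarith
      _ ≤ 0.5 := by linarith [Real.exp_neg_one_lt_half]
  rw [Real.sinh_eq]
  linarith [Real.one_le_exp hs]

theorem arsinh_le_one_add_abs_log {t : ℝ} (ht : 0 < t) :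
    Real.arsinh t ≤ 1 + |Real.log t| := by
  rw [← Real.arsinh_sinh (1 + |Real.log t|), Real.arsinh_le_arsinh]
  calc t = Real.exp (Real.log t) := (Real.exp_log ht).symm
    _ ≤ Real.exp |Real.log t| := by gcongr; exact le_abs_self _
    _ ≤ Real.sinh (1 + |Real.log t|) := exp_le_sinh_one_add (abs_nonneg _)

theorem log_div_sqrt_add_eq_neg_arsinh {x : ℝ} (hx : 0 < x) (y : ℝ) :
    Real.log (x / (√(x ^ 2 + y ^ 2) + y)) = -Real.arsinh (y / x) := by
  have sqrt_div : √(1 + (y / x) ^ 2) = √(x ^ 2 + y ^ 2) / x :=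
    calc √(1 + (y / x) ^ 2) = √((x ^ 2 + y ^ 2) / x ^ 2) := by congr 1; field_simp
      _ = √(x ^ 2 + y ^ 2) / x := by rw [Real.sqrt_div' _ (sq_nonneg x), Real.sqrt_sq hx.le]
  rw [Real.arsinh, sqrt_div, ← Real.log_inv, ← add_div, inv_div, add_comm y]

theorem sqrt_sq_add_sq_le_add {x y : ℝ} (hx : 0 ≤ x) (hy : 0 ≤ y) :
    √(x ^ 2 + y ^ 2) ≤ x + y :=
  Real.sqrt_le_iff.mpr ⟨by positivity, by linarith [add_sq x y, mul_nonneg hx hy]⟩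

theorem abs_log_div_sq_le {x y : ℝ} (hx : x ≠ 0) (hy : y ≠ 0) :
    |Real.log (x / y ^ 2)| ≤ |Real.log x| + 2 * |Real.log y| := by
  rw [Real.log_div hx (pow_ne_zero 2 hy), Real.log_pow]
  calc |Real.log x - (2 : ℕ) * Real.log y|
      ≤ |Real.log x| + |(2 : ℕ) * Real.log y| := abs_sub _ _
    _ = |Real.log x| + 2 * |Real.log y| := by rw [abs_mul, Nat.abs_cast, Nat.cast_ofNat]

theorem eguchiHanson_eq_sqrt_sub_arsinh (ε : ℝ) {z : EuclideanSpace ℂ (Fin 2)} (hz : z ≠ 0) :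
    eguchiHanson ε z =
      √((‖z‖ ^ 2) ^ 2 + ε ^ 2) - ε * Real.arsinh (ε / ‖z‖ ^ 2) := by
  have norm_sq_pos : 0 < ‖z‖ ^ 2 := by positivity
  have norm_pow_four : ‖z‖ ^ 4 = (‖z‖ ^ 2) ^ 2 := by ring
  rw [eguchiHanson, norm_pow_four, log_div_sqrt_add_eq_neg_arsinh norm_sq_pos, mul_neg,
    ← sub_eq_add_neg]

theorem abs_eguchiHanson_sub_norm_sq_le {ε : ℝ} (hε : 0 < ε)
    {z : EuclideanSpace ℂ (Fin 2)} (hz : z ≠ 0) :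
    |eguchiHanson ε z - ‖z‖ ^ 2| ≤ ε * (1 + |Real.log (ε / ‖z‖ ^ 2)|) := by
  have norm_sq_le_sqrt : ‖z‖ ^ 2 ≤ √((‖z‖ ^ 2) ^ 2 + ε ^ 2) :=
    Real.le_sqrt_of_sq_le (le_add_of_nonneg_right (sq_nonneg ε))
  have sqrt_le_add : √((‖z‖ ^ 2) ^ 2 + ε ^ 2) ≤ ‖z‖ ^ 2 + ε :=
    sqrt_sq_add_sq_le_add (sq_nonneg _) hε.le
  have mul_arsinh_nonneg : 0 ≤ ε * Real.arsinh (ε / ‖z‖ ^ 2) :=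
    mul_nonneg hε.le (Real.arsinh_nonneg_iff.mpr (by positivity))
  have mul_arsinh_le : ε * Real.arsinh (ε / ‖z‖ ^ 2) ≤ ε * (1 + |Real.log (ε / ‖z‖ ^ 2)|) := by
    gcongr
    exact arsinh_le_one_add_abs_log (by positivity)
  have le_bound : ε ≤ ε * (1 + |Real.log (ε / ‖z‖ ^ 2)|) :=
    le_mul_of_one_le_right hε.le (le_add_of_nonneg_right (abs_nonneg _))
  rw [eguchiHanson_eq_sqrt_sub_arsinh ε hz, abs_le]
  constructor <;> linarith

theorem eguchiHanson_error_bound_near_general {ε : ℝ} (hε : 0 < ε)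
    {z : EuclideanSpace ℂ (Fin 2)} (hz : z ≠ 0) :
    |eguchiHanson ε z - ‖z‖ ^ 2| ≤ 2 * ε * (1 + |Real.log ‖z‖| + |Real.log ε|) :=
  calc |eguchiHanson ε z - ‖z‖ ^ 2|
      ≤ ε * (1 + |Real.log (ε / ‖z‖ ^ 2)|) := abs_eguchiHanson_sub_norm_sq_le hε hz
    _ ≤ ε * (2 * (1 + |Real.log ‖z‖| + |Real.log ε|)) := by
      gcongr
      linarith [abs_log_div_sq_le hε.ne' (norm_ne_zero_iff.mpr hz), abs_nonneg (Real.log ε)]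
    _ = 2 * ε * (1 + |Real.log ‖z‖| + |Real.log ε|) := by ring

/-- There is a constant `C > 0` such that for every `ε ∈ (0,1]` and every `z` with
`0 < ‖z‖ ≤ 2`, the error term satisfies
`|F_ε(z) − ‖z‖²| ≤ C·ε·(1 + |log ‖z‖| + |log ε|)`. -/
theorem eguchiHanson_error_bound_near :
    ∃ C : ℝ, 0 < C ∧ ∀ ε : ℝ, 0 < ε → ε ≤ 1 →
      ∀ z : EuclideanSpace ℂ (Fin 2), 0 < ‖z‖ → ‖z‖ ≤ 2 →
        |eguchiHanson ε z - ‖z‖ ^ 2| ≤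
          C * ε * (1 + |Real.log ‖z‖| + |Real.log ε|) :=
  ⟨2, two_pos, fun _ hε _ _ hz _ =>
    eguchiHanson_error_bound_near_general hε (norm_pos_iff.mp hz)⟩
end
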